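/- There is a constant c > 0 such that every satisfiable CTL* formula θ has a model with at most 2^{2^{c·|θ|}} states in which every state has at most |θ| successors, where |θ| denotes the number of subformulas of θ. -/

import Mathlib

/-- Branching-time formulas in negation normal form. -/
inductive Form : Type where
  | tt : Form
  | ff : Form
  | prop : ℕ → Form
  | nprop : ℕ → Form
  | or : Form → Form → Form
  | and : Form → Form → Form
  | next : Form → Form
  | unt : Form → Form → Form
  | rel : Form → Form → Form
  | ex : Form → Form
  | al : Form → Form
deriving DecidableEq

namespace Form

/-- The set of subformulas of a formula. -/
def subf : Form → Finset Form
  | .tt => {.tt}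
  | .ff => {.ff}
  | .prop p => {.prop p}
  | .nprop p => {.nprop p}
  | .or a b => insert (.or a b) (a.subf ∪ b.subf)
  | .and a b => insert (.and a b) (a.subf ∪ b.subf)
  | .next a => insert (.next a) a.subf
  | .unt a b => insert (.unt a b) (a.subf ∪ b.subf)
  | .rel a b => insert (.rel a b) (a.subf ∪ b.subf)
  | .ex a => insert (.ex a) a.subf
  | .al a => insert (.al a) a.subf

/-- Literals are `tt`, `ff`, `p` and `¬p`. -/
def IsLiteral : Form → Prop
  | .tt => True
  | .ff => True
  | .prop _ => True
  | .nprop _ => True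
  | _ => False

/-- A formula of the form `Xφ`. -/
def IsNext : Form → Prop
  | .next _ => True
  | _ => False

/-- Remove a frontal `X`. -/
def unX : Form → Form
  | .next a => a
  | a => a

end Form

/-- The Fischer-Ladner closure of a formula: its subformulas together with
`X(φ U ψ)` for every subformula `φ U ψ` and `X(φ R ψ)` for every subformula `φ R ψ`. -/
def FL (θ : Form) : Finset Form :=
  θ.subf ∪ θ.subf.image (fun ψ =>
    match ψ with
    | .unt a b => Form.next (.unt a b)
    | .rel a b => Form.next (.rel a b)
    | _ => θ)

/-- A (total) transition system with a designated initial state and a labeling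
of states with sets of propositional constants. -/
structure TS (S : Type) where
  init : S
  step : S → S → Prop
  total : ∀ s, ∃ t, step s t
  label : S → Set ℕ

/-- An infinite path through a transition system. -/
structure TS.Path {S : Type} (T : TS S) where
  seq : ℕ → S
  valid : ∀ i, T.step (seq i) (seq (i + 1))

/-- The suffix `π^k` of a path `π`. -/
def TS.Path.suffix {S : Type} {T : TS S} (π : T.Path) (k : ℕ) : T.Path :=
  ⟨fun i => π.seq (k + i), fun i => π.valid (k + i)⟩

/-- Satisfaction of a branching-time formula on a path of a transition system. -/
def Sat {S : Type} (T : TS S) : T.Path → Form → Prop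
  | _, .tt => True
  | _, .ff => False
  | π, .prop p => p ∈ T.label (π.seq 0)
  | π, .nprop p => p ∉ T.label (π.seq 0)
  | π, .or a b => Sat T π a ∨ Sat T π b
  | π, .and a b => Sat T π a ∧ Sat T π b
  | π, .next a => Sat T (π.suffix 1) a
  | π, .unt a b => ∃ k, Sat T (π.suffix k) b ∧ ∀ j < k, Sat T (π.suffix j) a
  | π, .rel a b => ∀ k, Sat T (π.suffix k) b ∨ ∃ j < k, Sat T (π.suffix j) a
  | π, .ex a => ∃ π' : T.Path, π'.seq 0 = π.seq 0 ∧ Sat T π' a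
  | π, .al a => ∀ π' : T.Path, π'.seq 0 = π.seq 0 → Sat T π' a

/-- A state formula: satisfaction only depends on the first state of the path. -/
def IsStateForm (φ : Form) : Prop :=
  ∀ (S : Type) (T : TS S) (π π' : T.Path), π.seq 0 = π'.seq 0 → (Sat T π φ ↔ Sat T π' φ)

/-- A (state) formula is satisfiable if it holds at the initial state of some
transition system. -/
def Satisfiable (φ : Form) : Prop :=
  ∃ (S : Type) (T : TS S) (π : T.Path), π.seq 0 = T.init ∧ Sat T π φ

/-- Equivalence of branching-time formulas. -/
def FormEquiv (φ ψ : Form) : Prop :=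
  ∀ (S : Type) (T : TS S) (π : T.Path), Sat T π φ ↔ Sat T π ψ

theorem ev_const (f : ℕ → Ordinal.{0}) (N : ℕ) (h : ∀ n ≥ N, f (n + 1) ≤ f n) :
    ∃ M ≥ N, ∀ n ≥ M, f n = f M := by
  obtain ⟨x, ⟨M, hM, rfl⟩, hmin⟩ :=
    (wellFounded_lt (α := Ordinal.{0})).has_min (f '' {n | N ≤ n}) ⟨f N, N, le_refl N, rfl⟩
  refine ⟨M, hM, fun n hn => ?_⟩
  have hM' : N ≤ M := hM
  apply le_antisymm
  · induction n, hn using Nat.le_induction with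
    | base => exact le_rfl
    | succ n hn ih => exact (h n (by omega)).trans ih
  · exact not_lt.1 (hmin (f n) ⟨n, by show N ≤ n; omega, rfl⟩)

theorem ev_const_nat (f : ℕ → ℕ) (N : ℕ) (h : ∀ n ≥ N, f (n + 1) ≤ f n) :
    ∃ M ≥ N, ∀ n ≥ M, f n = f M := by
  obtain ⟨M, hM, h1⟩ := ev_const (fun n => (f n : Ordinal.{0})) N (fun n hn => by
    have := h n hn
    simpa using this)
  exact ⟨M, hM, fun n hn => by simpa using h1 n hn⟩

/-- One step of the seniority bookkeeping. -/
theorem naming_step {Q : Type} [Fintype Q] (a b : Q → Ordinal.{0}) (nm : Q → ℕ)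
    (hinj : ∀ q q', nm q = nm q' → a q = a q')
    (hlt : ∀ q, nm q < Fintype.card Q)
    (q0 : Q) (hq0 : b q0 = 0) :
    ∃ (nm' : Q → ℕ) (dn : Q → Q),
      (∀ q q', nm' q = nm' q' → b q = b q') ∧ (∀ q q', b q = b q' → nm' q = nm' q') ∧
      (∀ q, nm' q < Fintype.card Q) ∧
      (∀ p, b (dn p) ≤ a p) ∧ (∀ p q', b q' ≤ a p → b q' ≤ b (dn p)) ∧
      (∀ p, nm' (dn p) ≤ nm p) ∧
      (∀ p, nm' (dn p) = nm p → ∀ j ≤ nm p, ∃ p2, nm p2 = j ∧ nm' (dn p2) = j) := by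
  classical
  have hdn : ∀ p, ∃ d, b d ≤ a p ∧ ∀ q', b q' ≤ a p → b q' ≤ b d := by
    intro p
    obtain ⟨d, hd, hmax⟩ := Finset.exists_max_image (Finset.univ.filter (fun q' => b q' ≤ a p)) b
      ⟨q0, by simp [hq0]⟩
    exact ⟨d, by simpa using hd, fun q' hq' => hmax q' (by simpa using hq')⟩
  choose dn hdn1 hdn2 using hdn
  let e : Q ≃ Fin (Fintype.card Q) := Fintype.equivFin Q
  let A : Q → Set ℕ := fun q => {v | (∃ p, b (dn p) = b q ∧ v = nm p) ∨
    (∃ y, b y = b q ∧ v = Fintype.card Q + (e y : ℕ))}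
  let fi : Q → ℕ := fun q => sInf (A q)
  have hfi : ∀ q, fi q ∈ A q := fun q => Nat.sInf_mem ⟨_, Or.inr ⟨q, rfl, rfl⟩⟩
  have hfile : ∀ p, fi (dn p) ≤ nm p := fun p => Nat.sInf_le (Or.inl ⟨p, rfl, rfl⟩)
  have hdneq : ∀ p p', nm p = nm p' → b (dn p) = b (dn p') := by
    intro p p' h
    have h1 := hinj _ _ h
    apply le_antisymm
    · exact hdn2 _ _ (h1 ▸ hdn1 p)
    · exact hdn2 _ _ (h1 ▸ hdn1 p')
  have hficongr : ∀ q q', b q = b q' → fi q = fi q' := by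
    intro q q' h
    simp only [fi, A, h]
  have hfiinj : ∀ q q', fi q = fi q' → b q = b q' := by
    intro q q' h
    have h1 := hfi q
    have h2 := hfi q'
    rw [← h] at h2
    rcases h1 with ⟨p, hp, hp'⟩ | ⟨y, hy, hy'⟩ <;> rcases h2 with ⟨p2, hp2, hp2'⟩ | ⟨y2, hy2, hy2'⟩
    · rw [← hp, ← hp2]; exact hdneq _ _ (hp'.symm.trans hp2')
    · have := hlt p; omega
    · have := hlt p2; omega
    · have : e y = e y2 := Fin.ext (by omega)
      have := e.injective this
      rw [← hy, ← hy2, this]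
  let im : Finset ℕ := Finset.univ.image fi
  let g : ℕ → ℕ := fun v => (im.filter (· < v)).card
  have hgle : ∀ v, g v ≤ v := by
    intro v
    calc g v ≤ (Finset.range v).card := Finset.card_le_card (fun x hx => by
            simp only [Finset.mem_filter] at hx; simpa using hx.2)
      _ = v := Finset.card_range v
  have hfim : ∀ q, fi q ∈ im := fun q => Finset.mem_image_of_mem _ (Finset.mem_univ q)
  have hgmono : ∀ q q', fi q < fi q' → g (fi q) < g (fi q') := by
    intro q q' h
    apply Finset.card_lt_card
    refine Finset.ssubset_iff_of_subset (fun x hx => ?_) |>.2 ⟨fi q, ?_, ?_⟩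
    · simp only [Finset.mem_filter] at hx ⊢; exact ⟨hx.1, hx.2.trans h⟩
    · simp only [Finset.mem_filter]; exact ⟨hfim q, h⟩
    · simp
  refine ⟨fun q => g (fi q), dn, ?_, ?_, ?_, hdn1, hdn2, ?_, ?_⟩
  · intro q q' h
    apply hfiinj
    rcases lt_trichotomy (fi q) (fi q') with h1 | h1 | h1
    · have := hgmono _ _ h1; simp only at h; omega
    · exact h1
    · have := hgmono _ _ h1; simp only at h; omega
  · intro q q' h
    simp only [hficongr q q' h]
  · intro q
    have h1 : g (fi q) < im.card := by
      apply Finset.card_lt_card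
      refine Finset.ssubset_iff_of_subset (Finset.filter_subset _ _) |>.2 ⟨fi q, hfim q, ?_⟩
      simp
    exact h1.trans_le (Finset.card_image_le.trans (le_of_eq Finset.card_univ))
  · intro p
    exact (hgle _).trans (hfile p)
  · intro p hp j hj
    simp only at hp
    have h1 := hgle (fi (dn p))
    have h2 := hfile p
    have h3 : fi (dn p) = nm p := by omega
    rw [h3] at hp
    have h4 : im.filter (· < nm p) = Finset.range (nm p) := by
      apply Finset.eq_of_subset_of_card_le
      · intro x hx
        simp only [Finset.mem_filter] at hx; simpa using hx.2
      · rw [Finset.card_range]; exact hp.ge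
    have h5 : ∀ j < nm p, j ∈ im := by
      intro j hj
      have : j ∈ im.filter (· < nm p) := by rw [h4]; simpa using hj
      exact (Finset.mem_filter.1 this).1
    have h6 : j ∈ im := by
      rcases hj.lt_or_eq with h | h
      · exact h5 j h
      · rw [h, ← h3]; exact hfim _
    obtain ⟨y, -, hy⟩ := Finset.mem_image.1 h6
    have h7 : g j = j := by
      have : im.filter (· < j) = Finset.range j := by
        ext x
        simp only [Finset.mem_filter, Finset.mem_range]
        exact ⟨fun h => h.2, fun h => ⟨h5 x (by omega), h⟩⟩
      simp only [g, this, Finset.card_range]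
    rcases hfi y with ⟨p2, hp2, hp2'⟩ | ⟨z, hz, hz'⟩
    · refine ⟨p2, by omega, ?_⟩
      simp only
      rw [hficongr _ _ hp2, hy, h7]
    · have := hlt p; omega

/-- The core termination argument. -/
theorem core {Q : Type} [Fintype Q] (a b : ℕ → Q → Ordinal.{0}) (nm : ℕ → Q → ℕ)
    (dn : ℕ → Q → Q) (q0 : Q)
    (hinj : ∀ n q q', nm n q = nm n q' → a n q = a n q')
    (hinj' : ∀ n q q', a n q = a n q' → nm n q = nm n q')
    (hlt : ∀ n q, nm n q < Fintype.card Q)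
    (hpat : ∀ n q q', a (n + 1) q ≤ a (n + 1) q' ↔ b n q ≤ b n q')
    (hlex : ∀ n p, (∀ p2, nm (n + 1) p2 < nm (n + 1) p → a (n + 1) p2 = b n p2) →
      a (n + 1) p ≤ b n p)
    (hd1 : ∀ n p, b n (dn n p) ≤ a n p)
    (hd2 : ∀ n p q', b n q' ≤ a n p → b n q' ≤ b n (dn n p))
    (hd3 : ∀ n p, nm (n + 1) (dn n p) ≤ nm n p)
    (hd4 : ∀ n p, nm (n + 1) (dn n p) = nm n p →
      ∀ j ≤ nm n p, ∃ p2, nm n p2 = j ∧ nm (n + 1) (dn n p2) = j)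
    (F : Q → Prop) (q : ℕ → Q)
    (hq : ∀ n, b n (q (n + 1)) ≤ a n (q n))
    (hqF : ∀ n, F (q n) → b n (q (n + 1)) < a n (q n)) :
    ∃ N, ∀ n ≥ N, ¬ F (q n) := by
  classical
  have hbinj : ∀ n p p', nm (n + 1) p = nm (n + 1) p' → b n p = b n p' := by
    intro n p p' h
    have h1 := hinj _ _ _ h
    exact le_antisymm ((hpat _ _ _).1 h1.le) ((hpat _ _ _).1 h1.ge)
  let P : ℕ → ℕ → Q := fun n i => if h : ∃ p, nm n p = i then h.choose else q0
  have hP : ∀ n p, nm n (P n (nm n p)) = nm n p := by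
    intro n p
    have h : ∃ p', nm n p' = nm n p := ⟨p, rfl⟩
    simp only [P, dif_pos h]
    exact h.choose_spec
  let val : ℕ → ℕ → Ordinal.{0} := fun n i => a n (P n i)
  let valb : ℕ → ℕ → Ordinal.{0} := fun n i => b n (P (n + 1) i)
  have hval : ∀ n p, val n (nm n p) = a n p := fun n p => hinj _ _ _ (hP n p)
  have hvalb : ∀ n p, valb n (nm (n + 1) p) = b n p := fun n p => hbinj _ _ _ (hP (n + 1) p)
  let NK : ℕ → ℕ → Prop := fun n i => ∀ j ≤ i, ∃ p, nm n p = j ∧ nm (n + 1) (dn n p) = j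
  let Stable : ℕ → Prop := fun i => ∃ N, ∀ n ≥ N, NK n i
  have hdown : ∀ i j, j ≤ i → Stable i → Stable j := by
    rintro i j hji ⟨N, hN⟩
    exact ⟨N, fun n hn j' hj' => hN n hn j' (hj'.trans hji)⟩
  have hbig : ¬ Stable (Fintype.card Q) := by
    rintro ⟨N, hN⟩
    obtain ⟨p, hp, -⟩ := hN N le_rfl _ le_rfl
    have := hlt N p
    omega
  have hex : ∃ k, ¬ Stable k := ⟨_, hbig⟩
  let k := Nat.find hex
  have hk : ∀ i, Stable i ↔ i < k := by
    intro i
    constructor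
    · intro h
      by_contra hlt'
      exact Nat.find_spec hex (hdown i k (not_lt.1 hlt') h)
    · intro h
      exact not_not.1 (Nat.find_min hex h)
  -- values of stable names are eventually constant
  have hconst : ∀ l, l ≤ k → ∃ N, ∀ n ≥ N, ∀ j < l,
      val (n + 1) j = val n j ∧ valb n j = val n j ∧ ∃ p, nm n p = j := by
    intro l
    induction l with
    | zero => intro _; exact ⟨0, fun n _ j hj => by omega⟩
    | succ l ih =>
      intro hl
      obtain ⟨N1, hN1⟩ := ih (by omega)
      obtain ⟨N2, hN2⟩ := (hk l).2 (by omega)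
      have hstep : ∀ n ≥ max N1 N2, val (n + 1) l ≤ valb n l ∧ valb n l ≤ val n l := by
        intro n hn
        have hn1 : n ≥ N1 := (le_max_left _ _).trans hn
        have hn2 : n ≥ N2 := (le_max_right _ _).trans hn
        obtain ⟨p, hp, hp'⟩ := hN2 n hn2 l le_rfl
        constructor
        · have h1 : val (n + 1) l = a (n + 1) (dn n p) := by rw [← hval, hp']
          have h2 : valb n l = b n (dn n p) := by rw [← hvalb, hp']
          rw [h1, h2]
          apply hlex
          intro p2 hp2
          rw [hp'] at hp2
          obtain ⟨h3, h4, -⟩ := hN1 n hn1 _ hp2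
          rw [← hval, ← hvalb, h3, h4]
        · have h1 : val n l = a n p := by rw [← hval, hp]
          have h2 : valb n l = b n (dn n p) := by rw [← hvalb, hp']
          rw [h1, h2]
          exact hd1 _ _
      obtain ⟨M, hM, hMc⟩ := ev_const (fun n => val n l) (max N1 N2)
        (fun n hn => (hstep n hn).1.trans (hstep n hn).2)
      refine ⟨M, fun n hn j hj => ?_⟩
      rcases (Nat.lt_succ_iff.1 hj).lt_or_eq with h | h
      · exact hN1 n (((le_max_left _ _).trans hM).trans hn) j h
      · subst h
        have h1 := hMc n hn
        have h2 := hMc (n + 1) (by omega)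
        have h3 := hstep n (hM.trans hn)
        obtain ⟨p, hp, -⟩ := hN2 n (((le_max_right _ _).trans hM).trans hn) j le_rfl
        refine ⟨h2.trans h1.symm, le_antisymm h3.2 ?_, p, hp⟩
        rw [h1, ← h2]; exact h3.1
  obtain ⟨N, hN⟩ := hconst k le_rfl
  let c : ℕ → Ordinal.{0} := fun j => val N j
  have hc : ∀ n ≥ N, ∀ j < k, val n j = c j := by
    intro n hn j hj
    induction n, hn using Nat.le_induction with
    | base => rfl
    | succ n hn ih => rw [(hN n hn j hj).1, ih]
  have hcb : ∀ n ≥ N, ∀ j < k, valb n j = c j := by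
    intro n hn j hj
    rw [(hN n hn j hj).2.1, hc n hn j hj]
  let r : ℕ → Ordinal.{0} := fun n => a n (q n)
  have hrmono : ∀ n ≥ N, ∀ j < k, r n ≤ c j → r (n + 1) ≤ c j := by
    intro n hn j hj h
    rw [← hc (n + 1) (by omega) j hj]
    apply (hpat _ _ _).2
    calc b n (q (n + 1)) ≤ a n (q n) := hq n
      _ ≤ c j := h
      _ = valb n j := (hcb n hn j hj).symm
  have hrev : ∀ᶠ n in Filter.atTop, ∀ j ∈ Finset.range k, r (n + 1) ≤ c j → r n ≤ c j := by
    rw [Filter.eventually_all_finset]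
    intro j hj
    have hj' : j < k := by simpa using hj
    rw [Filter.eventually_atTop]
    by_cases h : ∃ n ≥ N, r n ≤ c j
    · obtain ⟨n0, hn0, h0⟩ := h
      refine ⟨n0, fun n hn _ => ?_⟩
      clear * - hn h0 hn0 hrmono hj'
      induction n, hn using Nat.le_induction with
      | base => exact h0
      | succ n hn ih => exact hrmono n (hn0.trans hn) j hj' ih
    · push Not at h
      exact ⟨N, fun n hn h' => absurd h' (not_le.2 (h (n + 1) (by omega)))⟩
  obtain ⟨N1, hN1⟩ := Filter.eventually_atTop.1 hrev
  let N' := max N N1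
  by_cases hst : ∀ n ≥ N', nm n (q n) < k
  · have hrr : ∀ n ≥ N', r (n + 1) = b n (q (n + 1)) := by
      intro n hn
      have h1 := hst (n + 1) (by omega)
      have hnN : n ≥ N := (le_max_left _ _).trans hn
      show a (n + 1) (q (n + 1)) = _
      rw [← hval, ← hvalb, hc (n + 1) (by omega) _ h1, hcb n hnN _ h1]
    obtain ⟨M, hM, hMc⟩ := ev_const r N' (fun n hn => by rw [hrr n hn]; exact hq n)
    refine ⟨M, fun n hn hF => ?_⟩
    have h1 := hqF n hF
    rw [← hrr n (hM.trans hn), hMc (n + 1) (by omega)] at h1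
    exact absurd (hMc n hn) h1.ne'
  · exfalso
    push Not at hst
    obtain ⟨n0, hn0, hun⟩ := hst
    let B : ℕ → ℕ → Prop := fun n i => ∃ p, nm n p = i ∧ r n ≤ a n p ∧
      ∀ j < k, r n ≤ c j → a n p < c j
    have hB0 : B n0 (nm n0 (q n0)) := by
      refine ⟨q n0, rfl, le_rfl, fun j hj hr => lt_of_le_of_ne hr ?_⟩
      intro heq
      have hnN : n0 ≥ N := (le_max_left _ _).trans hn0
      obtain ⟨p, hp⟩ := (hN n0 hnN j hj).2.2
      have h1 : a n0 p = c j := by rw [← hval, hp, hc n0 hnN j hj]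
      have h2 := hinj' n0 _ _ (h1.trans heq.symm)
      omega
    have hBstep : ∀ n ≥ N', ∀ i, B n i → ∃ i' ≤ i, B (n + 1) i' ∧ (i' = i → NK n i) := by
      rintro n hn i ⟨p, hp, hrp, hpj⟩
      have hnN : n ≥ N := (le_max_left _ _).trans hn
      have hnN1 : n ≥ N1 := (le_max_right _ _).trans hn
      refine ⟨nm (n + 1) (dn n p), hp ▸ hd3 n p, ⟨dn n p, rfl, ?_, ?_⟩, ?_⟩
      · exact (hpat _ _ _).2 (hd2 _ _ _ ((hq n).trans hrp))
      · intro j hj hr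
        have h1 := hN1 n hnN1 j (by simpa using hj) hr
        have h2 : b n (dn n p) < valb n j := by
          rw [hcb n hnN j hj]
          exact (hd1 n p).trans_lt (hpj j hj h1)
        rw [← hc (n + 1) (by omega) j hj]
        exact lt_of_not_ge (fun h => absurd ((hpat _ _ _).1 h) (not_le.2 h2))
      · intro h
        subst hp
        exact hd4 n p h
    have hBne : ∀ n ≥ n0, ∃ i, B n i := by
      intro n hn
      induction n, hn using Nat.le_induction with
      | base => exact ⟨_, hB0⟩
      | succ n hn ih =>
        obtain ⟨i, hi⟩ := ih
        obtain ⟨i', -, h, -⟩ := hBstep n (hn0.trans hn) i hi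
        exact ⟨i', h⟩
    let x : ℕ → ℕ := fun n => sInf {i | B n i}
    have hx : ∀ n ≥ n0, B n (x n) := fun n hn => Nat.sInf_mem (hBne n hn)
    have hxs : ∀ n ≥ n0, x (n + 1) ≤ x n ∧ (x (n + 1) = x n → NK n (x n)) := by
      intro n hn
      obtain ⟨i', hi', hBi', hnk⟩ := hBstep n (hn0.trans hn) (x n) (hx n hn)
      have h1 : x (n + 1) ≤ i' := Nat.sInf_le hBi'
      exact ⟨h1.trans hi', fun h => hnk (by omega)⟩
    obtain ⟨M, hM, hMc⟩ := ev_const_nat x n0 (fun n hn => (hxs n hn).1)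
    have hxst : Stable (x M) := by
      refine ⟨M, fun n hn => ?_⟩
      have h1 := hMc n hn
      have h2 := hMc (n + 1) (by omega)
      rw [← h1]
      exact (hxs n (hM.trans hn)).2 (by omega)
    have hxk := (hk _).1 hxst
    obtain ⟨p, hp, hrp, hpj⟩ := hx M hM
    have hMN : M ≥ N := ((le_max_left N N1).trans hn0).trans hM
    have h1 : a M p = c (x M) := by rw [← hval, hp, hc M hMN _ hxk]
    have h2 := hpj _ hxk (by rw [← h1]; exact hrp)
    rw [h1] at h2
    exact lt_irrefl _ h2

/-- Finite quotient of a ranked system. -/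
theorem quotient {V Λ I Q : Type} [Fintype Λ] [Fintype Q] (ℓ : V → Λ) (child : V → I → V)
    (ρ : V → Q → Ordinal.{0}) (q0 : Q) (h0 : ∀ v, ρ v q0 = 0)
    (R : Λ → I → Q → Q → Prop) (F : Q → Prop)
    (hR : ∀ v i q q', R (ℓ v) i q q' →
      ρ (child v i) q' ≤ ρ v q ∧ (F q → ρ (child v i) q' < ρ v q)) :
    ∃ (S : Type) (rep : S → V) (succ : S → I → S), Finite S ∧
      Nat.card S ≤ Fintype.card Λ * (Fintype.card Q ^ Fintype.card Q *
        2 ^ (Fintype.card Q * Fintype.card Q)) ∧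
      (∀ s i, ℓ (rep (succ s i)) = ℓ (child (rep s) i)) ∧
      (∀ v, ∃ s, ℓ (rep s) = ℓ v) ∧
      ∀ (s : ℕ → S) (d : ℕ → I) (q : ℕ → Q), (∀ n, s (n + 1) = succ (s n) (d n)) →
        (∀ n, R (ℓ (rep (s n))) (d n) (q n) (q (n + 1))) → ∃ N, ∀ n ≥ N, ¬ F (q n) := by
  classical
  let m := Fintype.card Q
  have hm : 0 < m := Fintype.card_pos_iff.2 ⟨q0⟩
  let Node := {x : V × (Q → Fin m) // ∀ q q', x.2 q = x.2 q' ↔ ρ x.1 q = ρ x.1 q'}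
  let t : Node → Λ × (Q → Fin m) × (Q → Q → Prop) := fun x =>
    (ℓ x.1.1, x.1.2, fun q q' => ρ x.1.1 q ≤ ρ x.1.1 q')
  -- children of nodes
  have hch : ∀ (x : Node) (i : I), ∃ (y : Node) (dn : Q → Q), y.1.1 = child x.1.1 i ∧
      (∀ p, ρ y.1.1 (dn p) ≤ ρ x.1.1 p) ∧
      (∀ p q', ρ y.1.1 q' ≤ ρ x.1.1 p → ρ y.1.1 q' ≤ ρ y.1.1 (dn p)) ∧
      (∀ p, (y.1.2 (dn p) : ℕ) ≤ x.1.2 p) ∧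
      (∀ p, (y.1.2 (dn p) : ℕ) = x.1.2 p →
        ∀ j ≤ (x.1.2 p : ℕ), ∃ p2, (x.1.2 p2 : ℕ) = j ∧ (y.1.2 (dn p2) : ℕ) = j) := by
    intro x i
    obtain ⟨nm', dn, h1, h2, h3, h4, h5, h6, h7⟩ := naming_step (ρ x.1.1) (ρ (child x.1.1 i))
      (fun q => (x.1.2 q : ℕ)) (fun q q' h => (x.2 q q').1 (Fin.ext h))
      (fun q => (x.1.2 q).2) q0 (h0 _)
    refine ⟨⟨(child x.1.1 i, fun q => ⟨nm' q, h3 q⟩), fun q q' => ?_⟩, dn, rfl, h4, h5, h6, h7⟩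
    constructor
    · intro h
      exact h1 _ _ (congrArg Fin.val h)
    · intro h
      exact Fin.ext (h2 _ _ h)
  have hinit : ∀ v : V, ∃ y : Node, y.1.1 = v := by
    intro v
    obtain ⟨nm', dn, h1, h2, h3, -⟩ := naming_step (fun _ : Q => (0 : Ordinal.{0})) (ρ v)
      (fun q => 0) (fun q q' h => rfl) (fun q => hm) q0 (h0 _)
    refine ⟨⟨(v, fun q => ⟨nm' q, h3 q⟩), fun q q' => ?_⟩, rfl⟩
    constructor
    · intro h
      exact h1 _ _ (congrArg Fin.val h)
    · intro h
      exact Fin.ext (h2 _ _ h)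
  choose chn dn hch0 hch1 hch2 hch3 hch4 using hch
  let Pf : (Q → Fin m) → Fin m → Q := fun nm i => if h : ∃ p, nm p = i then h.choose else q0
  have hPf : ∀ (nm : Q → Fin m) (i : Fin m), (∃ p, nm p = i) → nm (Pf nm i) = i := by
    intro nm i h
    simp only [Pf, dif_pos h]
    exact h.choose_spec
  have hPf' : ∀ (nm : Q → Fin m) (i : Fin m), (¬ ∃ p, nm p = i) → Pf nm i = q0 := by
    intro nm i h
    simp only [Pf, dif_neg h]
  let vec : Node → Fin m → Ordinal.{0} := fun x i => ρ x.1.1 (Pf x.1.2 i)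
  have hwf : WellFounded (Pi.Lex (· < ·) (fun {_ : Fin m} => ((· < ·) : Ordinal.{0} → Ordinal.{0} → Prop))) :=
    Pi.Lex.wellFounded (· < ·) (fun _ => wellFounded_lt)
  have hmin : ∀ s : Set.range t, ∃ x : Node, t x = s.1 ∧ ∀ y : Node, t y = s.1 →
      ¬ Pi.Lex (· < ·) (fun {_ : Fin m} => ((· < ·) : Ordinal.{0} → Ordinal.{0} → Prop)) (vec y) (vec x) := by
    rintro ⟨_, x0, rfl⟩
    obtain ⟨x, hx, hx'⟩ := (InvImage.wf vec hwf).has_min {x | t x = t x0} ⟨x0, rfl⟩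
    exact ⟨x, hx, fun y hy => hx' y hy⟩
  choose rp hrp hrpmin using hmin
  refine ⟨Set.range t, fun s => (rp s).1.1, fun s i => ⟨t (chn (rp s) i), _, rfl⟩, inferInstance,
    ?_, ?_, ?_, ?_⟩
  · calc Nat.card (Set.range t) ≤ Nat.card (Λ × (Q → Fin m) × (Q → Q → Prop)) :=
          Nat.card_le_card_of_injective _ Subtype.val_injective
      _ = _ := by
          simp [Nat.card_eq_fintype_card, m, ← pow_mul]
  · intro s i
    have h1 := hrp ⟨t (chn (rp s) i), _, rfl⟩
    have h2 := congrArg Prod.fst h1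
    exact h2.trans (congrArg ℓ (hch0 _ _))
  · intro v
    obtain ⟨y, hy⟩ := hinit v
    refine ⟨⟨t y, y, rfl⟩, ?_⟩
    have h1 := hrp ⟨t y, y, rfl⟩
    have h2 := congrArg Prod.fst h1
    exact h2.trans (congrArg ℓ hy)
  · intro s d q hs hq
    have hty : ∀ n, t (rp (s (n + 1))) = t (chn (rp (s n)) (d n)) := by
      intro n
      rw [hrp, hs n]
    have htn : ∀ n, (rp (s (n + 1))).1.2 = (chn (rp (s n)) (d n)).1.2 := by
      intro n
      exact congrArg (fun z => z.2.1) (hty n)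
    have htp : ∀ n p p', ρ (rp (s (n + 1))).1.1 p ≤ ρ (rp (s (n + 1))).1.1 p' ↔
        ρ (chn (rp (s n)) (d n)).1.1 p ≤ ρ (chn (rp (s n)) (d n)).1.1 p' := by
      intro n p p'
      have := congrFun (congrFun (congrArg (fun z => z.2.2) (hty n)) p) p'
      exact iff_of_eq this
    refine core (fun n => ρ (rp (s n)).1.1) (fun n => ρ (chn (rp (s n)) (d n)).1.1)
      (fun n q => ((rp (s n)).1.2 q : ℕ)) (fun n => dn (rp (s n)) (d n)) q0
      ?_ ?_ ?_ htp ?_ ?_ ?_ ?_ ?_ F q ?_ ?_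
    · intro n p p' h
      exact ((rp (s n)).2 p p').1 (Fin.ext h)
    · intro n p p' h
      exact congrArg Fin.val (((rp (s n)).2 p p').2 h)
    · intro n p
      exact ((rp (s n)).1.2 p).2
    · intro n p hp
      by_contra hcon
      push Not at hcon
      refine hrpmin (s (n + 1)) (chn (rp (s n)) (d n)) ?_ ?_
      · rw [← hty, hrp]
      · refine ⟨(rp (s (n + 1))).1.2 p, ?_, ?_⟩
        · intro j hj
          simp only [vec, ← htn n]
          by_cases hu : ∃ p, (rp (s (n + 1))).1.2 p = j
          · refine (hp _ ?_).symm
            rw [hPf _ _ hu]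
            exact hj
          · rw [hPf' _ _ hu, h0, h0]
        · simp only [vec, ← htn n]
          have h1 := hPf (rp (s (n + 1))).1.2 _ ⟨p, rfl⟩
          have h2 := ((rp (s (n + 1))).2 _ _).1 h1
          have h3 : ρ (chn (rp (s n)) (d n)).1.1 (Pf (rp (s (n + 1))).1.2 ((rp (s (n + 1))).1.2 p)) =
              ρ (chn (rp (s n)) (d n)).1.1 p :=
            le_antisymm ((htp n _ _).1 h2.le) ((htp n _ _).1 h2.ge)
          rw [h2, h3]
          exact hcon
    · intro n p
      exact hch1 _ _ _
    · intro n p q' h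
      exact hch2 _ _ _ _ h
    · intro n p
      simp only [htn n]
      exact hch3 _ _ _
    · intro n p h
      simp only [htn n] at h ⊢
      exact hch4 _ _ _ h
    · intro n
      simp only [hch0]
      exact (hR _ _ _ _ (hq n)).1
    · intro n hF
      simp only [hch0]
      exact (hR _ _ _ _ (hq n)).2 hF

/-- The descent relation: `y` is reachable from `x` by a run that passes through `F`
before its last state. -/
def Desc {X : Type} (r : X → X → Prop) (F : X → Prop) (y x : X) : Prop :=
  ∃ z z', Relation.ReflTransGen r x z ∧ F z ∧ r z z' ∧ Relation.ReflTransGen r z' y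

theorem Desc.of_step {X : Type} {r : X → X → Prop} {F : X → Prop} {x x' y : X}
    (h : r x x') (hy : Desc r F y x') : Desc r F y x := by
  obtain ⟨z, z', h1, h2, h3, h4⟩ := hy
  exact ⟨z, z', h1.head h, h2, h3, h4⟩

theorem acc_step {X : Type} {r : X → X → Prop} {F : X → Prop} {x x' : X}
    (h : r x x') (hx : Acc (Desc r F) x) : Acc (Desc r F) x' :=
  Acc.intro _ fun _ hy => hx.inv (Desc.of_step h hy)

theorem acc_rank_le {X : Type} {r : X → X → Prop} {F : X → Prop} {x x' : X}
    (h : r x x') (hx : Acc (Desc r F) x) (hx' : Acc (Desc r F) x') : hx'.rank ≤ hx.rank := by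
  rw [hx'.rank_eq]
  apply Ordinal.iSup_le
  rintro ⟨y, hy⟩
  exact Order.succ_le_of_lt (hx.rank_lt_of_rel (Desc.of_step h hy))

theorem acc_rank_lt {X : Type} {r : X → X → Prop} {F : X → Prop} {x x' : X}
    (h : r x x') (hF : F x) (hx : Acc (Desc r F) x) (hx' : Acc (Desc r F) x') :
    hx'.rank < hx.rank :=
  hx.rank_lt_of_rel ⟨x, x', .refl, hF, h, .refl⟩

/-- A non-accessible state starts a run visiting `F` infinitely often. -/
theorem exists_run {X : Type} (r : X → X → Prop) (F : X → Prop) (x : X)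
    (hx : ¬ Acc (Desc r F) x) :
    ∃ u : ℕ → X, u 0 = x ∧ (∀ n, r (u n) (u (n + 1))) ∧ ∀ N, ∃ n ≥ N, F (u n) := by
  classical
  let B : X → Prop := fun x => ¬ Acc (Desc r F) x
  have hback : ∀ x y, Relation.ReflTransGen r x y → B y → B x := by
    intro x y h
    induction h using Relation.ReflTransGen.head_induction_on with
    | refl => exact id
    | head h _ ih => exact fun hy hacc => ih hy (acc_step h hacc)
  let D : ℕ → X → Prop := fun n => Nat.rec (motive := fun _ => X → Prop) (fun x => F x ∧ ∃ x', r x x' ∧ B x')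
    (fun _ D x => ∃ x', r x x' ∧ B x' ∧ D x') n
  have hD : ∀ x, B x → ∃ n, D n x := by
    intro x hx
    have : ∃ y, Desc r F y x ∧ B y := by
      by_contra hcon
      push Not at hcon
      exact hx (Acc.intro _ fun y hy => not_not.1 (hcon y hy))
    obtain ⟨y, ⟨z, z', h1, h2, h3, h4⟩, hy⟩ := this
    have hz' := hback _ _ h4 hy
    have hz : B z := hback _ _ (Relation.ReflTransGen.single h3) hz'
    clear hx
    induction h1 using Relation.ReflTransGen.head_induction_on with
    | refl => exact ⟨0, h2, z', h3, hz'⟩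
    | head h h' ih =>
      obtain ⟨n, hn⟩ := ih
      exact ⟨n + 1, _, h, hback _ _ h' hz, hn⟩
  let dist : {x // B x} → ℕ := fun x => Nat.find (hD x.1 x.2)
  have hnext : ∀ x : {x // B x}, ∃ x' : {x // B x}, r x.1 x'.1 ∧ (F x.1 ∨ dist x' < dist x) := by
    rintro ⟨x, hx⟩
    have hs := Nat.find_spec (hD x hx)
    rcases hn : Nat.find (hD x hx) with _ | n
    · rw [hn] at hs
      obtain ⟨hF, x', h1, h2⟩ := hs
      exact ⟨⟨x', h2⟩, h1, Or.inl hF⟩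
    · rw [hn] at hs
      obtain ⟨x', h1, h2, h3⟩ := hs
      refine ⟨⟨x', h2⟩, h1, Or.inr ?_⟩
      have : Nat.find (hD x' h2) ≤ n := Nat.find_min' _ h3
      show Nat.find (hD x' h2) < Nat.find (hD x hx)
      omega
  choose nx hnx1 hnx2 using hnext
  let u : ℕ → {x // B x} := fun n => nx^[n] ⟨x, hx⟩
  have hu : ∀ n, u (n + 1) = nx (u n) := fun n => Function.iterate_succ_apply' _ _ _
  refine ⟨fun n => (u n).1, rfl, fun n => ?_, fun N => ?_⟩
  · simp only [hu]; exact hnx1 _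
  · by_contra hcon
    push Not at hcon
    have hdec : ∀ k, dist (u (N + k)) + k ≤ dist (u N) := by
      intro k
      induction k with
      | zero => simp
      | succ k ih =>
        have h1 := (hnx2 (u (N + k))).resolve_left (hcon _ (by omega))
        rw [← hu] at h1
        have : N + (k + 1) = N + k + 1 := by omega
        rw [this]
        omega
    have := hdec (dist (u N) + 1)
    omega

/-- Formulas whose truth depends on the first state only for syntactic reasons. -/
def AtomF : Form → Prop
  | .or _ _ => False
  | .and _ _ => False
  | .next _ => False
  | .unt _ _ => False
  | .rel _ _ => False
  | _ => True

/-- Local consistency of a set `Δ` of formulas assumed to be false. -/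
def Cons (Φ Δ Δ' : Finset Form) : Form → Prop
  | .or a b => a ∈ Δ ∧ b ∈ Δ
  | .and a b => a ∈ Δ ∨ b ∈ Δ
  | .next a => a ∈ Δ'
  | .unt a b => b ∈ Δ ∧ (a ∈ Δ ∨ Form.unt a b ∈ Δ')
  | .rel a b => b ∈ Δ ∨ (a ∈ Δ ∧ Form.rel a b ∈ Δ')
  | φ => φ ∉ Φ

theorem suffix_suffix {S : Type} {T : TS S} (p : T.Path) (n k : ℕ) :
    (p.suffix n).suffix k = p.suffix (n + k) := by
  simp only [TS.Path.suffix, Nat.add_assoc]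

theorem suffix_zero {S : Type} {T : TS S} (p : T.Path) : p.suffix 0 = p := by
  simp only [TS.Path.suffix, Nat.zero_add]

theorem path_ext {S : Type} {T : TS S} {p p' : T.Path} (h : ∀ n, p.seq n = p'.seq n) : p = p' := by
  obtain ⟨s, hs⟩ := p
  obtain ⟨s', hs'⟩ := p'
  have : s = s' := funext h
  subst this
  rfl

theorem suffix_seq_zero {S : Type} {T : TS S} (p : T.Path) (n : ℕ) :
    (p.suffix n).seq 0 = p.seq n := rfl

theorem sat_atom_congr {S : Type} {T : TS S} {φ : Form} (h : AtomF φ) {p p' : T.Path}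
    (h0 : p.seq 0 = p'.seq 0) : Sat T p φ ↔ Sat T p' φ := by
  cases φ <;> simp_all [AtomF, Sat]

theorem sat_unt {S : Type} {T : TS S} (p : T.Path) (a b : Form) :
    Sat T p (.unt a b) ↔ Sat T p b ∨ (Sat T p a ∧ Sat T (p.suffix 1) (.unt a b)) := by
  simp only [Sat, suffix_suffix]
  constructor
  · rintro ⟨k, hk, hj⟩
    rcases k with _ | k
    · left; rwa [suffix_zero] at hk
    · right
      refine ⟨by simpa only [suffix_zero] using hj 0 (by omega), k, ?_, fun j hjk => ?_⟩
      · rwa [Nat.add_comm]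
      · rw [Nat.add_comm]; exact hj _ (by omega)
  · rintro (h | ⟨ha, k, hk, hj⟩)
    · exact ⟨0, by rwa [suffix_zero], fun j hj => by omega⟩
    · refine ⟨1 + k, hk, fun j hjk => ?_⟩
      rcases j with _ | j
      · rwa [suffix_zero]
      · rw [Nat.add_comm]; exact hj _ (by omega)

theorem sat_rel {S : Type} {T : TS S} (p : T.Path) (a b : Form) :
    Sat T p (.rel a b) ↔ Sat T p b ∧ (Sat T p a ∨ Sat T (p.suffix 1) (.rel a b)) := by
  simp only [Sat, suffix_suffix]
  constructor
  · intro h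
    refine ⟨by simpa [suffix_zero] using h 0, ?_⟩
    by_cases ha : Sat T p a
    · exact Or.inl ha
    · right
      intro k
      rcases h (1 + k) with h1 | ⟨j, hj, hja⟩
      · exact Or.inl h1
      · right
        rcases j with _ | j
        · rw [suffix_zero] at hja; exact absurd hja ha
        · exact ⟨j, by omega, by rwa [Nat.add_comm]⟩
  · rintro ⟨hb, h⟩ k
    rcases k with _ | k
    · left; rwa [suffix_zero]
    · rcases h with ha | h
      · exact Or.inr ⟨0, by omega, by rwa [suffix_zero]⟩
      · rcases h k with h1 | ⟨j, hj, hja⟩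
        · left; rwa [Nat.add_comm]
        · exact Or.inr ⟨1 + j, by omega, hja⟩

/-- Soundness of fair threads. -/
theorem thread_sound {S : Type} {T : TS S} (p : T.Path) (Φ Δ O : ℕ → Finset Form)
    (hat : ∀ n φ, AtomF φ → φ ∈ Δ n → φ ∉ Φ n → ¬ Sat T (p.suffix n) φ)
    (hcons : ∀ n, ∀ φ ∈ Δ n, Cons (Φ n) (Δ n) (Δ (n + 1)) φ)
    (hbr : ∀ n a b, Form.rel a b ∈ Δ (n + 1) → b ∉ Δ (n + 1) →
      (O n = ∅ ∨ Form.rel a b ∈ O n) → Form.rel a b ∈ O (n + 1))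
    (hfair : ∀ N, ∃ n ≥ N, O n = ∅) :
    ∀ φ n, φ ∈ Δ n → ¬ Sat T (p.suffix n) φ := by
  intro φ
  induction φ with
  | tt => exact fun n h => hat n _ trivial h (hcons n _ h)
  | ff => exact fun n h => hat n _ trivial h (hcons n _ h)
  | prop x => exact fun n h => hat n _ trivial h (hcons n _ h)
  | nprop x => exact fun n h => hat n _ trivial h (hcons n _ h)
  | ex a _ => exact fun n h => hat n _ trivial h (hcons n _ h)
  | al a _ => exact fun n h => hat n _ trivial h (hcons n _ h)
  | or a b iha ihb =>
    intro n h
    have := hcons n _ h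
    simp only [Cons] at this
    simp only [Sat, not_or]
    exact ⟨iha n this.1, ihb n this.2⟩
  | and a b iha ihb =>
    intro n h
    have := hcons n _ h
    simp only [Cons] at this
    simp only [Sat]
    rintro ⟨h1, h2⟩
    exact this.elim (fun h => iha n h h1) (fun h => ihb n h h2)
  | next a iha =>
    intro n h
    have := hcons n _ h
    simp only [Cons] at this
    simp only [Sat, suffix_suffix]
    exact iha _ this
  | unt a b iha ihb =>
    intro n h
    simp only [Sat, suffix_suffix]
    rintro ⟨k, hk, hj⟩
    have h1 : ∀ j ≤ k, Form.unt a b ∈ Δ (n + j) := by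
      intro j
      induction j with
      | zero => exact fun _ => h
      | succ j ih =>
        intro hjk
        have h2 := hcons _ _ (ih (by omega))
        simp only [Cons] at h2
        rcases h2.2 with h3 | h3
        · exact absurd (hj j (by omega)) (iha _ h3)
        · exact h3
    have h2 := hcons _ _ (h1 k le_rfl)
    simp only [Cons] at h2
    exact ihb _ h2.1 hk
  | rel a b iha ihb =>
    intro n h hs
    by_cases hall : ∀ k, Form.rel a b ∈ Δ (n + k) ∧ b ∉ Δ (n + k)
    · obtain ⟨n1, hn1, hO⟩ := hfair n
      have h1 : ∀ k, Form.rel a b ∈ O (n1 + 1 + k) := by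
        intro k
        have e : ∀ x, n ≤ x → Form.rel a b ∈ Δ x ∧ b ∉ Δ x := by
          intro x hx
          have := hall (x - n)
          rwa [Nat.add_sub_cancel' hx] at this
        induction k with
        | zero => exact hbr n1 a b (e _ (by omega)).1 (e _ (by omega)).2 (Or.inl hO)
        | succ k ih =>
          exact hbr (n1 + 1 + k) a b (e _ (by omega)).1 (e _ (by omega)).2 (Or.inr ih)
      obtain ⟨n2, hn2, hO2⟩ := hfair (n1 + 1)
      have h2 := h1 (n2 - (n1 + 1))
      rw [Nat.add_sub_cancel' hn2, hO2] at h2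
      simp at h2
    · apply hall
      have h1 : ∀ k, Form.rel a b ∈ Δ (n + k) ∧ Sat T (p.suffix (n + k)) (.rel a b) := by
        intro k
        induction k with
        | zero => exact ⟨h, hs⟩
        | succ k ih =>
          have h2 := hcons _ _ ih.1
          simp only [Cons] at h2
          have h3 := (sat_rel _ _ _).1 ih.2
          rcases h2 with h2 | ⟨h2, h4⟩
          · exact absurd h3.1 (ihb _ h2)
          · refine ⟨h4, ?_⟩
            have h5 := h3.2.resolve_left (iha _ h2)
            rwa [suffix_suffix] at h5
      intro k
      exact ⟨(h1 k).1, fun hb => ihb _ hb ((sat_rel _ _ _).1 (h1 k).2).1⟩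

theorem self_mem_subf (φ : Form) : φ ∈ φ.subf := by
  cases φ <;> simp [Form.subf]

theorem subf_trans {χ φ ψ : Form} (h1 : χ ∈ φ.subf) (h2 : φ ∈ ψ.subf) : χ ∈ ψ.subf := by
  induction ψ with
  | tt => simp [Form.subf] at h2; subst h2; exact h1
  | ff => simp [Form.subf] at h2; subst h2; exact h1
  | prop x => simp [Form.subf] at h2; subst h2; exact h1
  | nprop x => simp [Form.subf] at h2; subst h2; exact h1
  | or a b iha ihb | and a b iha ihb | unt a b iha ihb | rel a b iha ihb =>
    rw [Form.subf, Finset.mem_insert, Finset.mem_union] at h2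
    rcases h2 with h2 | h2 | h2
    · subst h2; exact h1
    · rw [Form.subf, Finset.mem_insert, Finset.mem_union]; exact Or.inr (Or.inl (iha h2))
    · rw [Form.subf, Finset.mem_insert, Finset.mem_union]; exact Or.inr (Or.inr (ihb h2))
  | next a iha | ex a iha | al a iha =>
    rw [Form.subf, Finset.mem_insert] at h2
    rcases h2 with h2 | h2
    · subst h2; exact h1
    · rw [Form.subf, Finset.mem_insert]; exact Or.inr (iha h2)

theorem exists_nonex (θ : Form) : ∃ χ ∈ θ.subf, ∀ ψ, χ ≠ Form.ex ψ := by
  induction θ with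
  | ex a ih =>
    obtain ⟨χ, h1, h2⟩ := ih
    exact ⟨χ, by simp [Form.subf, h1], h2⟩
  | _ => exact ⟨_, self_mem_subf _, fun ψ => by simp⟩

open Classical in
/-- The false subformulas of `ψ` on the `n`-th suffix of a path. -/
noncomputable def falseSet {S : Type} {T : TS S} (p : T.Path) (ψ : Form) (n : ℕ) : Finset Form :=
  ψ.subf.filter (fun φ => ¬ Sat T (p.suffix n) φ)

theorem mem_falseSet {S : Type} {T : TS S} (p : T.Path) (ψ : Form) (n : ℕ) (φ : Form) :
    φ ∈ falseSet p ψ n ↔ φ ∈ ψ.subf ∧ ¬ Sat T (p.suffix n) φ := by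
  simp [falseSet]

theorem falseSet_cons {S : Type} {T : TS S} (p : T.Path) (ψ : Form) (Φ : ℕ → Finset Form)
    (hat : ∀ n, ∀ χ ∈ ψ.subf, AtomF χ → χ ∈ Φ n → Sat T (p.suffix n) χ) (n : ℕ) :
    ∀ φ ∈ falseSet p ψ n, Cons (Φ n) (falseSet p ψ n) (falseSet p ψ (n + 1)) φ := by
  intro φ hφ
  rw [mem_falseSet] at hφ
  obtain ⟨h1, h2⟩ := hφ
  cases φ with
  | tt => exact fun h => h2 (hat n _ h1 trivial h)
  | ff => exact fun h => h2 (hat n _ h1 trivial h)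
  | prop x => exact fun h => h2 (hat n _ h1 trivial h)
  | nprop x => exact fun h => h2 (hat n _ h1 trivial h)
  | ex a => exact fun h => h2 (hat n _ h1 trivial h)
  | al a => exact fun h => h2 (hat n _ h1 trivial h)
  | or a b =>
    have ha : a ∈ ψ.subf := subf_trans (by simp [Form.subf, self_mem_subf]) h1
    have hb : b ∈ ψ.subf := subf_trans (by simp [Form.subf, self_mem_subf]) h1
    simp only [Sat] at h2
    simp only [Cons, mem_falseSet]
    tauto
  | and a b =>
    have ha : a ∈ ψ.subf := subf_trans (by simp [Form.subf, self_mem_subf]) h1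
    have hb : b ∈ ψ.subf := subf_trans (by simp [Form.subf, self_mem_subf]) h1
    simp only [Sat] at h2
    simp only [Cons, mem_falseSet]
    tauto
  | next a =>
    have ha : a ∈ ψ.subf := subf_trans (by simp [Form.subf, self_mem_subf]) h1
    simp only [Sat, suffix_suffix] at h2
    simp only [Cons, mem_falseSet]
    tauto
  | unt a b =>
    have ha : a ∈ ψ.subf := subf_trans (by simp [Form.subf, self_mem_subf]) h1
    have hb : b ∈ ψ.subf := subf_trans (by simp [Form.subf, self_mem_subf]) h1
    rw [sat_unt, suffix_suffix] at h2
    simp only [Cons, mem_falseSet]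
    tauto
  | rel a b =>
    have ha : a ∈ ψ.subf := subf_trans (by simp [Form.subf, self_mem_subf]) h1
    have hb : b ∈ ψ.subf := subf_trans (by simp [Form.subf, self_mem_subf]) h1
    rw [sat_rel, suffix_suffix] at h2
    simp only [Cons, mem_falseSet]
    tauto

open Classical in
/-- Pending release formulas. -/
noncomputable def pend (Δ : Finset Form) : Finset Form :=
  Δ.filter (fun χ => ∃ a b, χ = Form.rel a b ∧ b ∉ Δ)

theorem pend_subset (Δ : Finset Form) : pend Δ ⊆ Δ := by
  classical
  exact Finset.filter_subset _ _

/-- The breakpoint sets. -/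
noncomputable def breakSeq (Δ : ℕ → Finset Form) : ℕ → Finset Form
  | 0 => ∅
  | n + 1 => if breakSeq Δ n = ∅ then pend (Δ (n + 1)) else breakSeq Δ n ∩ pend (Δ (n + 1))

theorem breakSeq_subset (Δ : ℕ → Finset Form) (n : ℕ) : breakSeq Δ n ⊆ Δ n := by
  rcases n with _ | n
  · simp [breakSeq]
  · rw [breakSeq]
    split
    · exact pend_subset _
    · exact Finset.inter_subset_right.trans (pend_subset _)

theorem breakSeq_br (Δ : ℕ → Finset Form) (n : ℕ) (a b : Form) (h1 : Form.rel a b ∈ Δ (n + 1))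
    (h2 : b ∉ Δ (n + 1)) (h : breakSeq Δ n = ∅ ∨ Form.rel a b ∈ breakSeq Δ n) :
    Form.rel a b ∈ breakSeq Δ (n + 1) := by
  have hp : Form.rel a b ∈ pend (Δ (n + 1)) := by
    simp only [pend, Finset.mem_filter]
    exact ⟨h1, a, b, rfl, h2⟩
  rw [breakSeq]
  split
  · exact hp
  · rename_i hne
    exact Finset.mem_inter.2 ⟨h.resolve_left hne, hp⟩

theorem breakSeq_fair {S : Type} {T : TS S} (p : T.Path) (ψ : Form) (N : ℕ) :
    ∃ n ≥ N, breakSeq (falseSet p ψ) n = ∅ := by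
  by_contra hcon
  push Not at hcon
  have hsub : ∀ n ≥ N, breakSeq (falseSet p ψ) (n + 1) ⊆ breakSeq (falseSet p ψ) n ∧
      breakSeq (falseSet p ψ) (n + 1) ⊆ pend (falseSet p ψ (n + 1)) := by
    intro n hn
    rw [breakSeq, if_neg (Finset.nonempty_iff_ne_empty.1 (hcon n hn))]
    exact ⟨Finset.inter_subset_left, Finset.inter_subset_right⟩
  obtain ⟨M, hM, hMc⟩ := ev_const_nat (fun n => (breakSeq (falseSet p ψ) n).card) N
    (fun n hn => Finset.card_le_card (hsub n hn).1)
  have hconst : ∀ n ≥ M, breakSeq (falseSet p ψ) n = breakSeq (falseSet p ψ) M := by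
    intro n hn
    induction n, hn using Nat.le_induction with
    | base => rfl
    | succ n hn ih =>
      rw [← ih]
      apply Finset.eq_of_subset_of_card_le (hsub n (hM.trans hn)).1
      have h1 := hMc n hn
      have h2 := hMc (n + 1) (by omega)
      simp only [ge_iff_le] at h1 h2 ⊢
      omega
  obtain ⟨χ, hχ⟩ := hcon M hM
  have hall : ∀ n ≥ M, χ ∈ pend (falseSet p ψ (n + 1)) := by
    intro n hn
    apply (hsub n (hM.trans hn)).2
    rwa [hconst (n + 1) (by omega)]
  have h0 := hall M le_rfl
  simp only [pend, Finset.mem_filter] at h0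
  obtain ⟨h1, a, b, rfl, -⟩ := h0
  rw [mem_falseSet] at h1
  have hb : b ∈ ψ.subf := subf_trans (by simp [Form.subf, self_mem_subf]) h1.1
  apply h1.2
  simp only [Sat, suffix_suffix]
  intro k
  left
  have h2 := hall (M + k) (by omega)
  simp only [pend, Finset.mem_filter] at h2
  obtain ⟨-, a', b', he, h3⟩ := h2
  obtain ⟨rfl, rfl⟩ : a = a' ∧ b = b' := by simpa using he
  rw [mem_falseSet] at h3
  have e : M + k + 1 = M + 1 + k := by omega
  rw [e] at h3
  by_contra hcon'
  exact h3 ⟨hb, hcon'⟩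

/-- Sets of subformulas. -/
abbrev PS (θ : Form) : Type := {Δ : Finset Form // Δ ∈ θ.subf.powerset}

/-- Directions. -/
abbrev Dir (θ : Form) : Type := {χ : Form // χ ∈ θ.subf}

/-- Thread states: mode, false formulas, breakpoint. -/
abbrev QS (θ : Form) : Type := Option (Dir θ) × PS θ × PS θ

/-- Local transition relation of threads. -/
def Raw {θ : Form} (d0 : Dir θ) (Φ : Finset Form) (i : Dir θ) (q q' : QS θ) : Prop :=
  (∀ φ ∈ q.2.1.1, Cons Φ q.2.1.1 q'.2.1.1 φ) ∧
  (∀ a b, Form.rel a b ∈ q'.2.1.1 → b ∉ q'.2.1.1 →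
    (q.2.2.1 = ∅ ∨ Form.rel a b ∈ q.2.2.1) → Form.rel a b ∈ q'.2.2.1) ∧
  (∀ d, q.1 = some d → i = d ∧ q'.1 = some d0) ∧
  (q.1 = none → q'.1 = none)

open Classical in
/-- A witness path for an existential formula. -/
noncomputable def wit {S : Type} (T : TS S) (π : T.Path) (χ : Form) : T.Path :=
  if h : ∃ π' : T.Path, ∃ ψ, χ = Form.ex ψ ∧ π'.seq 0 = π.seq 0 ∧ Sat T π' ψ then h.choose else π

theorem wit_zero {S : Type} (T : TS S) (π : T.Path) (χ : Form) :
    (wit T π χ).seq 0 = π.seq 0 := by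
  unfold wit
  split
  · rename_i h
    obtain ⟨ψ, -, h2, -⟩ := h.choose_spec
    exact h2
  · rfl

theorem wit_ex {S : Type} (T : TS S) (π : T.Path) (ψ : Form) (hs : Sat T π (.ex ψ)) :
    Sat T (wit T π (.ex ψ)) ψ := by
  have h : ∃ π' : T.Path, ∃ ψ', Form.ex ψ = Form.ex ψ' ∧ π'.seq 0 = π.seq 0 ∧ Sat T π' ψ' := by
    simp only [Sat] at hs
    obtain ⟨π', h1, h2⟩ := hs
    exact ⟨π', ψ, rfl, h1, h2⟩
  unfold wit
  rw [dif_pos h]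
  obtain ⟨ψ', h1, -, h2⟩ := h.choose_spec
  obtain rfl : ψ = ψ' := by simpa using h1
  exact h2

theorem wit_nonex {S : Type} (T : TS S) (π : T.Path) (χ : Form) (h : ∀ ψ, χ ≠ Form.ex ψ) :
    wit T π χ = π := by
  unfold wit
  rw [dif_neg]
  rintro ⟨_, ψ, h1, -⟩
  exact h ψ h1

open Classical in
/-- True subformulas. -/
noncomputable def trueSet {S : Type} (T : TS S) (θ : Form) (π : T.Path) : PS θ :=
  ⟨θ.subf.filter (fun φ => Sat T π φ), by simp⟩

theorem mem_trueSet {S : Type} (T : TS S) (θ : Form) (π : T.Path) (φ : Form) :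
    φ ∈ (trueSet T θ π).1 ↔ φ ∈ θ.subf ∧ Sat T π φ := by
  simp [trueSet]

/-- The tree of witness paths. -/
noncomputable def child {S : Type} (T : TS S) {θ : Form} (π : T.Path) (i : Dir θ) : T.Path :=
  (wit T π i.1).suffix 1

/-- Transition relation of threads along the tree. -/
def TRel {S : Type} (T : TS S) {θ : Form} (d0 : Dir θ) (x y : T.Path × QS θ) : Prop :=
  ∃ i : Dir θ, y.1 = child T x.1 i ∧ Raw d0 (trueSet T θ x.1).1 i x.2 y.2

/-- Empty breakpoint. -/
def TF {S : Type} (T : TS S) {θ : Form} (x : T.Path × QS θ) : Prop := x.2.2.2.1 = ∅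

/-- No fair thread starts here. -/
def Good {S : Type} (T : TS S) {θ : Form} (d0 : Dir θ) (v : T.Path) (q : QS θ) : Prop :=
  Acc (Desc (TRel T d0) (TF T)) (v, q)

theorem run_false {S : Type} (T : TS S) {θ : Form} (d0 : Dir θ) (v : T.Path) (q : QS θ)
    (h : ¬ Good T d0 v q) :
    ∃ (u : ℕ → T.Path × QS θ) (p : T.Path), u 0 = (v, q) ∧ (∀ n, TRel T d0 (u n) (u (n + 1))) ∧
      (∀ n, p.seq n = (u n).1.seq 0) ∧ ∀ φ ∈ q.2.1.1, ¬ Sat T p φ := by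
  obtain ⟨u, h0, hs, hF⟩ := exists_run _ _ _ h
  have hval : ∀ n, T.step ((u n).1.seq 0) ((u (n + 1)).1.seq 0) := by
    intro n
    obtain ⟨i, hi, -⟩ := hs n
    rw [hi, ← wit_zero T (u n).1 i.1]
    exact (wit T (u n).1 i.1).valid 0
  refine ⟨u, ⟨fun n => (u n).1.seq 0, hval⟩, h0, hs, fun _ => rfl, ?_⟩
  intro φ hφ
  have := thread_sound (T := T) ⟨fun n => (u n).1.seq 0, hval⟩
    (fun n => (trueSet T θ (u n).1).1) (fun n => (u n).2.2.1.1) (fun n => (u n).2.2.2.1)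
    ?_ ?_ ?_ ?_ φ 0 (by rw [h0]; exact hφ)
  · rwa [suffix_zero] at this
  · intro n φ hat hΔ hΦ hsat
    apply hΦ
    rw [mem_trueSet]
    refine ⟨Finset.mem_powerset.1 (u n).2.2.1.2 hΔ, ?_⟩
    refine (sat_atom_congr hat ?_).1 hsat
    rfl
  · intro n
    obtain ⟨i, -, hr⟩ := hs n
    exact hr.1
  · intro n
    obtain ⟨i, -, hr⟩ := hs n
    exact hr.2.1
  · exact hF

theorem good_al {S : Type} (T : TS S) {θ : Form} (d0 : Dir θ) (v : T.Path) (q : QS θ) (ψ : Form)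
    (h : Sat T v (.al ψ)) (hψ : ψ ∈ q.2.1.1) : Good T d0 v q := by
  by_contra hg
  obtain ⟨u, p, h0, -, hp, hf⟩ := run_false T d0 v q hg
  apply hf ψ hψ
  simp only [Sat] at h
  apply h
  rw [hp, h0]

theorem good_dir {S : Type} (T : TS S) {θ : Form} (d0 : Dir θ) (hd0 : ∀ ψ, d0.1 ≠ Form.ex ψ)
    (v : T.Path) (q : QS θ) (d : Dir θ) (hd : q.1 = some d) (ψ : Form)
    (h : Sat T (wit T v d.1) ψ) (hψ : ψ ∈ q.2.1.1) : Good T d0 v q := by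
  by_contra hg
  obtain ⟨u, p, h0, hs, hp, hf⟩ := run_false T d0 v q hg
  apply hf ψ hψ
  have key : ∀ n, (u (n + 1)).1 = (wit T v d.1).suffix (n + 1) ∧ (u (n + 1)).2.1 = some d0 := by
    intro n
    induction n with
    | zero =>
      obtain ⟨i, hi, hr⟩ := hs 0
      have h1 := hr.2.2.1 d (by rw [h0]; exact hd)
      refine ⟨?_, h1.2⟩
      rw [hi, h0, h1.1]; rfl
    | succ n ih =>
      obtain ⟨i, hi, hr⟩ := hs (n + 1)
      have h1 := hr.2.2.1 d0 ih.2
      refine ⟨?_, h1.2⟩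
      rw [hi, h1.1, child, wit_nonex _ _ _ hd0, ih.1, suffix_suffix]
  have : p = wit T v d.1 := by
    apply path_ext
    intro n
    rw [hp]
    rcases n with _ | n
    · rw [h0, wit_zero]
    · rw [(key n).1]; rfl
  rwa [this]

/-- Labels of the tree. -/
abbrev Lab (θ : Form) : Type := PS θ × Set (QS θ)

/-- Labeling of the tree. -/
noncomputable def lab {S : Type} (T : TS S) {θ : Form} (d0 : Dir θ) (v : T.Path) : Lab θ :=
  (trueSet T θ v, {q | Good T d0 v q})

open Classical in
/-- Rank of thread states. -/
noncomputable def rk {S : Type} (T : TS S) {θ : Form} (d0 : Dir θ) (v : T.Path) :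
    Option (QS θ) → Ordinal.{0}
  | none => 0
  | some q => if h : Acc (Desc (TRel T d0) (TF T)) (v, q) then h.rank else 0

/-- Relation on thread states determined by labels. -/
def QR {θ : Form} (d0 : Dir θ) (l : Lab θ) (i : Dir θ) : Option (QS θ) → Option (QS θ) → Prop
  | some q, some q' => q ∈ l.2 ∧ Raw d0 l.1.1 i q q'
  | _, _ => False

/-- Accepting thread states. -/
def QF {θ : Form} : Option (QS θ) → Prop
  | some q => q.2.2.1 = ∅
  | none => False

theorem tree_quotient {S0 : Type} (T : TS S0) {θ : Form} (d0 : Dir θ) :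
    ∃ (S : Type) (rep : S → T.Path) (succ : S → Dir θ → S), Finite S ∧
      Nat.card S ≤ Nat.card (Lab θ) * (Nat.card (Option (QS θ)) ^ Nat.card (Option (QS θ)) *
        2 ^ (Nat.card (Option (QS θ)) * Nat.card (Option (QS θ)))) ∧
      (∀ s i, lab T d0 (rep (succ s i)) = lab T d0 (child T (rep s) i)) ∧
      (∀ v, ∃ s, lab T d0 (rep s) = lab T d0 v) ∧
      ∀ (s : ℕ → S) (d : ℕ → Dir θ) (q : ℕ → Option (QS θ)), (∀ n, s (n + 1) = succ (s n) (d n)) →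
        (∀ n, QR d0 (lab T d0 (rep (s n))) (d n) (q n) (q (n + 1))) → ∃ N, ∀ n ≥ N, ¬ QF (q n) := by
  classical
  have := quotient (V := T.Path) (lab T d0) (child T (θ := θ)) (rk T d0) none (fun _ => rfl)
    (QR d0) QF ?_
  · simpa only [Nat.card_eq_fintype_card] using this
  · intro v i q q' h
    rcases q with _ | q
    · exact h.elim
    rcases q' with _ | q'
    · exact h.elim
    obtain ⟨hg, hr⟩ := h
    have hstep : TRel T d0 (v, q) (child T v i, q') := ⟨i, rfl, hr⟩
    have hg' : Acc (Desc (TRel T d0) (TF T)) (v, q) := hg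
    have hg2 := acc_step hstep hg'
    simp only [rk, dif_pos hg', dif_pos hg2]
    exact ⟨acc_rank_le hstep hg' hg2, fun hF => acc_rank_lt hstep hF hg' hg2⟩

/-- The quotient transition system. -/
def quoTS {S0 S : Type} (T : TS S0) {θ : Form} (d0 : Dir θ) (rep : S → T.Path)
    (succ : S → Dir θ → S) (s0 : S) : TS S where
  init := s0
  step s t := ∃ i, t = succ s i
  total s := ⟨succ s d0, d0, rfl⟩
  label s := T.label ((rep s).seq 0)

theorem thread_main {S0 S : Type} (T : TS S0) {θ : Form} (d0 : Dir θ) (rep : S → T.Path)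
    (succ : S → Dir θ → S) (s0 : S)
    (hlab : ∀ s i, lab T d0 (rep (succ s i)) = lab T d0 (child T (rep s) i))
    (hq : ∀ (s : ℕ → S) (d : ℕ → Dir θ) (q : ℕ → Option (QS θ)),
      (∀ n, s (n + 1) = succ (s n) (d n)) →
      (∀ n, QR d0 (lab T d0 (rep (s n))) (d n) (q n) (q (n + 1))) → ∃ N, ∀ n ≥ N, ¬ QF (q n))
    (ψ : Form) (hψ : ψ ∈ θ.subf)
    (hat : ∀ χ ∈ ψ.subf, AtomF χ → ∀ p : (quoTS T d0 rep succ s0).Path,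
      χ ∈ (trueSet T θ (rep (p.seq 0))).1 → Sat _ p χ)
    (p : (quoTS T d0 rep succ s0).Path) (dd : ℕ → Dir θ) (md : ℕ → Option (Dir θ))
    (hdd : ∀ n, p.seq (n + 1) = succ (p.seq n) (dd n))
    (hmd : ∀ n, (∀ d, md n = some d → dd n = d ∧ md (n + 1) = some d0) ∧
      (md n = none → md (n + 1) = none))
    (hgood : ∀ q : QS θ, q.1 = md 0 → ψ ∈ q.2.1.1 → Good T d0 (rep (p.seq 0)) q) :
    Sat _ p ψ := by
  by_contra hcon
  have hsub : ∀ n, falseSet p ψ n ∈ θ.subf.powerset := by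
    intro n
    rw [Finset.mem_powerset]
    intro χ hχ
    rw [mem_falseSet] at hχ
    exact subf_trans hχ.1 hψ
  have hsub2 : ∀ n, breakSeq (falseSet p ψ) n ∈ θ.subf.powerset := by
    intro n
    rw [Finset.mem_powerset]
    exact (breakSeq_subset _ n).trans (Finset.mem_powerset.1 (hsub n))
  let q : ℕ → QS θ := fun n => (md n, ⟨_, hsub n⟩, ⟨_, hsub2 n⟩)
  have hraw : ∀ n, Raw d0 (trueSet T θ (rep (p.seq n))).1 (dd n) (q n) (q (n + 1)) := by
    intro n
    refine ⟨?_, ?_, (hmd n).1, (hmd n).2⟩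
    · exact falseSet_cons p ψ (fun n => (trueSet T θ (rep (p.seq n))).1)
        (fun n χ h1 h2 h3 => hat χ h1 h2 (p.suffix n) h3) n
    · intro a b h1 h2 h3
      exact breakSeq_br _ n a b h1 h2 h3
  have hg : ∀ n, Good T d0 (rep (p.seq n)) (q n) := by
    intro n
    induction n with
    | zero =>
      apply hgood _ rfl
      change ψ ∈ falseSet p ψ 0
      rw [mem_falseSet, suffix_zero]
      exact ⟨self_mem_subf _, hcon⟩
    | succ n ih =>
      have h1 : Good T d0 (child T (rep (p.seq n)) (dd n)) (q (n + 1)) :=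
        acc_step ⟨dd n, rfl, hraw n⟩ ih
      have h2 : q (n + 1) ∈ (lab T d0 (rep (succ (p.seq n) (dd n)))).2 := by
        rw [hlab]; exact h1
      rw [hdd]; exact h2
  obtain ⟨N, hN⟩ := hq p.seq dd (fun n => some (q n)) hdd (fun n => ⟨hg n, hraw n⟩)
  obtain ⟨n, hn, he⟩ := breakSeq_fair p ψ N
  exact hN n hn he

/-- The path following given directions. -/
def followSeq {S I : Type} (succ : S → I → S) (s : S) (dd : ℕ → I) : ℕ → S
  | 0 => s
  | n + 1 => succ (followSeq succ s dd n) (dd n)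

theorem quo_claim {S0 S : Type} (T : TS S0) {θ : Form} (d0 : Dir θ)
    (hd0 : ∀ ψ, d0.1 ≠ Form.ex ψ) (rep : S → T.Path)
    (succ : S → Dir θ → S) (s0 : S)
    (hlab : ∀ s i, lab T d0 (rep (succ s i)) = lab T d0 (child T (rep s) i))
    (hq : ∀ (s : ℕ → S) (d : ℕ → Dir θ) (q : ℕ → Option (QS θ)),
      (∀ n, s (n + 1) = succ (s n) (d n)) →
      (∀ n, QR d0 (lab T d0 (rep (s n))) (d n) (q n) (q (n + 1))) → ∃ N, ∀ n ≥ N, ¬ QF (q n))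
    (φ : Form) (hφ : φ ∈ θ.subf) :
    ∀ χ ∈ φ.subf, AtomF χ → ∀ p : (quoTS T d0 rep succ s0).Path,
      χ ∈ (trueSet T θ (rep (p.seq 0))).1 → Sat _ p χ := by
  induction φ with
  | tt | ff | prop x | nprop x =>
    intro χ hχ _ p hp
    simp only [Form.subf, Finset.mem_singleton] at hχ
    subst hχ
    rw [mem_trueSet] at hp
    exact hp.2
  | or a b iha ihb | and a b iha ihb | unt a b iha ihb | rel a b iha ihb =>
    intro χ hχ
    rw [Form.subf, Finset.mem_insert, Finset.mem_union] at hχ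
    rcases hχ with rfl | hχ | hχ
    · exact fun h => h.elim
    · exact iha (subf_trans (by simp [Form.subf, self_mem_subf]) hφ) χ hχ
    · exact ihb (subf_trans (by simp [Form.subf, self_mem_subf]) hφ) χ hχ
  | next a iha =>
    intro χ hχ
    rw [Form.subf, Finset.mem_insert] at hχ
    rcases hχ with rfl | hχ
    · exact fun h => h.elim
    · exact iha (subf_trans (by simp [Form.subf, self_mem_subf]) hφ) χ hχ
  | ex a iha =>
    have ha : a ∈ θ.subf := subf_trans (by simp [Form.subf, self_mem_subf]) hφ
    intro χ hχ
    rw [Form.subf, Finset.mem_insert] at hχ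
    rcases hχ with rfl | hχ
    · intro _ p hp
      rw [mem_trueSet] at hp
      let dd : ℕ → Dir θ := fun n => if n = 0 then ⟨_, hφ⟩ else d0
      let p' : (quoTS T d0 rep succ s0).Path :=
        ⟨followSeq succ (p.seq 0) dd, fun n => ⟨dd n, rfl⟩⟩
      refine ⟨p', rfl, ?_⟩
      refine thread_main T d0 rep succ s0 hlab hq a ha (iha ha) p' dd (fun n => some (dd n))
        (fun _ => rfl) ?_ ?_
      · intro n
        refine ⟨fun d hd => ⟨by simpa using hd, ?_⟩, fun h => by simp at h⟩
        simp [dd]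
      · intro q h1 h2
        exact good_dir T d0 hd0 _ q ⟨_, hφ⟩ h1 a (wit_ex T _ a hp.2) h2
    · exact iha ha χ hχ
  | al a iha =>
    have ha : a ∈ θ.subf := subf_trans (by simp [Form.subf, self_mem_subf]) hφ
    intro χ hχ
    rw [Form.subf, Finset.mem_insert] at hχ
    rcases hχ with rfl | hχ
    · intro _ p hp
      rw [mem_trueSet] at hp
      intro p' hp'
      choose dd hdd using p'.valid
      refine thread_main T d0 rep succ s0 hlab hq a ha (iha ha) p' dd (fun n => none)
        hdd ?_ ?_
      · intro n
        exact ⟨fun d hd => by simp at hd, fun _ => rfl⟩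
      · intro q h1 h2
        rw [hp']
        exact good_al T d0 _ q a hp.2 h2
    · exact iha ha χ hχ

theorem card_bound (n L Qc : ℕ) (hn : 1 ≤ n) (hQ : Qc = (n + 1) * (2 ^ n * 2 ^ n) + 1)
    (hL : L = 2 ^ n * 2 ^ ((n + 1) * (2 ^ n * 2 ^ n))) :
    L * (Qc ^ Qc * 2 ^ (Qc * Qc)) ≤ 2 ^ 2 ^ (10 * n) := by
  have h1 : n + 1 ≤ 2 ^ n := Nat.lt_two_pow_self
  have hM : Qc ≤ 2 ^ (4 * n) := by
    have h2 : (n + 1) * (2 ^ n * 2 ^ n) ≤ 2 ^ (3 * n) := by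
      calc _ ≤ 2 ^ n * (2 ^ n * 2 ^ n) := Nat.mul_le_mul_right _ h1
        _ = _ := by rw [← pow_add, ← pow_add]; congr 1; ring
    have h3 : 2 ^ (3 * n) + 1 ≤ 2 ^ (4 * n) :=
      Nat.pow_lt_pow_right (by norm_num) (by omega)
    omega
  have hL2 : L = 2 ^ (n + (Qc - 1)) := by
    rw [hL, hQ, pow_add]; simp
  have hQ1 : 1 ≤ Qc := by omega
  have hnQ : n ≤ Qc := by
    rw [hQ]
    have : 1 ≤ 2 ^ n * 2 ^ n := Nat.one_le_iff_ne_zero.2 (by positivity)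
    nlinarith
  have hQQ : Qc ^ Qc ≤ 2 ^ (Qc * Qc) := by
    rw [pow_mul]
    exact Nat.pow_le_pow_left Nat.lt_two_pow_self.le _
  calc L * (Qc ^ Qc * 2 ^ (Qc * Qc))
      ≤ 2 ^ (n + (Qc - 1)) * (2 ^ (Qc * Qc) * 2 ^ (Qc * Qc)) := by
        rw [hL2]; gcongr
    _ = 2 ^ (n + (Qc - 1) + (Qc * Qc + Qc * Qc)) := by rw [← pow_add, ← pow_add]
    _ ≤ 2 ^ 2 ^ (10 * n) := by
      apply Nat.pow_le_pow_right (by norm_num)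
      have h5 : n + (Qc - 1) + (Qc * Qc + Qc * Qc) ≤ 4 * (Qc * Qc) := by
        have : Qc ≤ Qc * Qc := Nat.le_mul_of_pos_left _ hQ1
        omega
      have h6 : Qc * Qc ≤ 2 ^ (8 * n) := by
        calc _ ≤ 2 ^ (4 * n) * 2 ^ (4 * n) := Nat.mul_le_mul hM hM
          _ = _ := by rw [← pow_add]; congr 1; ring
      calc _ ≤ 4 * 2 ^ (8 * n) := by omega
        _ = 2 ^ (2 + 8 * n) := by rw [pow_add]; norm_num
        _ ≤ _ := Nat.pow_le_pow_right (by norm_num) (by omega)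

theorem card_PS (θ : Form) : Nat.card (PS θ) = 2 ^ θ.subf.card := by
  rw [Nat.card_eq_fintype_card, Fintype.card_coe, Finset.card_powerset]

theorem card_Dir (θ : Form) : Nat.card (Dir θ) = θ.subf.card := by
  rw [Nat.card_eq_fintype_card, Fintype.card_coe]

theorem card_QS (θ : Form) :
    Nat.card (QS θ) = (θ.subf.card + 1) * (2 ^ θ.subf.card * 2 ^ θ.subf.card) := by
  rw [Nat.card_prod, Nat.card_prod, card_PS, Finite.card_option, card_Dir]

theorem card_Lab (θ : Form) : Nat.card (Lab θ) =
    2 ^ θ.subf.card * 2 ^ ((θ.subf.card + 1) * (2 ^ θ.subf.card * 2 ^ θ.subf.card)) := by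
  rw [Nat.card_prod, card_PS, ← card_QS]
  congr 1
  classical
  rw [Nat.card_eq_fintype_card, Nat.card_eq_fintype_card, Fintype.card_set]

/-- **Corollary (small model property, linear branching-width).** There is a
constant `c > 0` such that any satisfiable CTL* formula `θ` has a model of size at
most `2^(2^(c·|θ|))` and branching-width at most `|θ|`. -/
theorem ctlstar_small_model_linear_branching :
    ∃ c : ℕ, 0 < c ∧ ∀ θ : Form, IsStateForm θ → Satisfiable θ →
      ∃ (S : Type), Finite S ∧ ∃ (T : TS S) (π : T.Path),
        π.seq 0 = T.init ∧ Sat T π θ ∧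
        Nat.card S ≤ 2 ^ 2 ^ (c * θ.subf.card) ∧
        ∀ s : S, {t : S | T.step s t}.ncard ≤ θ.subf.card := by
  refine ⟨10, by norm_num, fun θ _ hsat => ?_⟩
  obtain ⟨S0, T0, π0, -, hθ⟩ := hsat
  obtain ⟨χ0, hχ0, hne⟩ := exists_nonex θ
  let d0 : Dir θ := ⟨χ0, hχ0⟩
  obtain ⟨S, rep, succ, hfin, hcard, hlab, hsurj, hq⟩ := tree_quotient T0 d0
  obtain ⟨s0, hs0⟩ := hsurj π0
  refine ⟨S, hfin, quoTS T0 d0 rep succ s0,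
    ⟨followSeq succ s0 (fun _ => d0), fun n => ⟨d0, rfl⟩⟩, rfl, ?_, ?_, ?_⟩
  · refine thread_main T0 d0 rep succ s0 hlab hq θ (self_mem_subf θ)
      (quo_claim T0 d0 hne rep succ s0 hlab hq θ (self_mem_subf θ)) _ (fun _ => d0)
      (fun _ => some d0) (fun _ => rfl) ?_ ?_
    · intro n
      exact ⟨fun d hd => ⟨by simpa using hd, rfl⟩, fun h => by simp at h⟩
    · intro q h1 h2
      have hg : Good T0 d0 π0 q :=
        good_dir T0 d0 hne π0 q d0 h1 θ (by rw [wit_nonex _ _ _ hne]; exact hθ) h2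
      have h3 : q ∈ (lab T0 d0 (rep s0)).2 := by rw [hs0]; exact hg
      exact h3
  · refine hcard.trans ?_
    refine card_bound _ _ _ (Finset.card_pos.2 ⟨θ, self_mem_subf θ⟩) ?_ (card_Lab θ)
    rw [Finite.card_option, card_QS]
  · intro s
    have h1 : {t : S | (quoTS T0 d0 rep succ s0).step s t} = Set.range (succ s) := by
      ext t
      exact ⟨fun ⟨i, hi⟩ => ⟨i, hi.symm⟩, fun ⟨i, hi⟩ => ⟨i, hi.symm⟩⟩
    rw [h1, ← card_Dir θ, ← Nat.card_coe_set_eq]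
    exact Finite.card_range_le _
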